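/- For all μ, ν ∈ ℂⁿ, the Rawnsley coherent state kernel admits the closed form ψ_μ(ν) := Σ_{(q₁,…,qₙ): q₁+⋯+qₙ ≤ m} conj(μ₁^{q₁}⋯μₙ^{qₙ}) · ν₁^{q₁}⋯νₙ^{qₙ} / D_{(q₁,…,qₙ;q)} = (1 + ⟨μ,ν⟩)^m, where ⟨μ,ν⟩ = Σⱼ conj(μⱼ)νⱼ and D_{(q₁,…,qₙ;q)} = c(m) ∫_{ℂⁿ} |ν₁|^{2q₁}⋯|νₙ|^{2qₙ} (1+‖ν‖²)^{-(m+n+1)} dλ(ν). -/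

import Mathlib

open MeasureTheory

/-- The normalizing constant `c(m)`, with
`c(m)⁻¹ = ∫_{ℂⁿ} (1+‖ν‖²)^{-(m+n+1)} dλ(ν)`. -/
noncomputable def cconst (n m : ℕ) : ℝ :=
  (∫ ν : Fin n → ℂ, ((1 + ∑ j, Complex.normSq (ν j)) ^ (m + n + 1))⁻¹)⁻¹

/-- `D_{(q₁,…,qₙ;q)} = c(m) ∫_{ℂⁿ} |ν₁|^{2q₁}⋯|νₙ|^{2qₙ} (1+‖ν‖²)^{-(m+n+1)} dλ(ν)`,
the squared weighted norm of the monomial `ν^q`. -/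
noncomputable def Dconst (n m : ℕ) (q : Fin n → ℕ) : ℝ :=
  cconst n m *
    ∫ ν : Fin n → ℂ, (∏ j, Complex.normSq (ν j) ^ q j) *
      ((1 + ∑ j, Complex.normSq (ν j)) ^ (m + n + 1))⁻¹


theorem aux_lint {α : Type*} [MeasurableSpace α] {ρ : Measure α} {f : α → ℝ} {c : ℝ}
    (hf : 0 ≤ᵐ[ρ] f) (hc : 0 < c) (h : ∫ x, f x ∂ρ = c) :
    ∫⁻ x, ENNReal.ofReal (f x) ∂ρ = ENNReal.ofReal c := by
  have hi : Integrable f ρ := .of_integral_ne_zero (by rw [h]; exact hc.ne')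
  rw [← ofReal_integral_eq_lintegral_ofReal hi hf, h]

theorem aux_gamma (k : ℕ) (r : ℝ) (hr : 0 < r) :
    ∫ t in Set.Ioi (0 : ℝ), t ^ k * Real.exp (-(r * t)) = (k.factorial : ℝ) * (r ^ (k + 1))⁻¹ := by
  have h := Real.integral_rpow_mul_exp_neg_mul_Ioi (a := (k : ℝ) + 1) (r := r) (by positivity) hr
  rw [Real.Gamma_nat_eq_factorial] at h
  simp only [add_sub_cancel_right, Real.rpow_natCast] at h
  rw [h, one_div, Real.inv_rpow hr.le, mul_comm]
  norm_cast

theorem aux_complex (k : ℕ) (t : ℝ) (ht : 0 < t) :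
    ∫ z : ℂ, Complex.normSq z ^ k * Real.exp (-(Complex.normSq z * t))
      = Real.pi * (k.factorial : ℝ) * (t ^ (k + 1))⁻¹ := by
  have h := Complex.integral_rpow_mul_exp_neg_mul_rpow (p := 2) (q := ((2 * k : ℕ) : ℝ)) (b := t)
    (by norm_num) (by have : (0 : ℝ) ≤ ((2 * k : ℕ) : ℝ) := by positivity
                      linarith) ht
  have e1 : -((((2 * k : ℕ) : ℝ)) + 2) / 2 = -(((k + 1 : ℕ)) : ℝ) := by push_cast; ring
  have e2 : ((((2 * k : ℕ) : ℝ)) + 2) / 2 = (k : ℝ) + 1 := by push_cast; ring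
  rw [e1, e2, Real.Gamma_nat_eq_factorial, Real.rpow_neg ht.le, Real.rpow_natCast] at h
  calc _ = ∫ x : ℂ, ‖x‖ ^ ((2 * k : ℕ) : ℝ) * Real.exp (-t * ‖x‖ ^ (2 : ℝ)) := by
        congr 1; ext z
        rw [Real.rpow_natCast, Real.rpow_two, Complex.normSq_eq_norm_sq, pow_mul]
        congr 2; ring
    _ = _ := by rw [h]; ring

theorem aux_main (n K : ℕ) (q : Fin n → ℕ) :
    ∫ ν : Fin n → ℂ, (∏ j, Complex.normSq (ν j) ^ q j) *
      ((1 + ∑ j, Complex.normSq (ν j)) ^ (K + ∑ j, q j + n + 1))⁻¹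
    = Real.pi ^ n * (∏ j, ((q j).factorial : ℝ)) * K.factorial / (K + ∑ j, q j + n).factorial := by
  set M := K + ∑ j, q j + n with hM
  have hS : ∀ ν : Fin n → ℂ, 0 < 1 + ∑ j, Complex.normSq (ν j) := fun ν => by
    have : 0 ≤ ∑ j, Complex.normSq (ν j) := Finset.sum_nonneg fun j _ => Complex.normSq_nonneg _
    linarith
  have hP : ∀ ν : Fin n → ℂ, 0 ≤ ∏ j, Complex.normSq (ν j) ^ q j := fun ν =>
    Finset.prod_nonneg fun j _ => pow_nonneg (Complex.normSq_nonneg _) _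
  have hmeas : Continuous (Complex.normSq) := Complex.continuous_normSq
  set P : (Fin n → ℂ) → ℝ := fun ν => ∏ j, Complex.normSq (ν j) ^ q j with hPdef
  set S : (Fin n → ℂ) → ℝ := fun ν => 1 + ∑ j, Complex.normSq (ν j) with hSdef
  have hPc : Continuous P := by fun_prop
  have hSc : Continuous S := by fun_prop
  have step1 : ∀ ν, ∫⁻ t in Set.Ioi (0 : ℝ),
      ENNReal.ofReal (P ν * (t ^ M * Real.exp (-(S ν * t))))
      = ENNReal.ofReal (P ν * (M.factorial * (S ν ^ (M + 1))⁻¹)) := by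
    intro ν
    have h := aux_lint (ρ := volume.restrict (Set.Ioi (0 : ℝ)))
      (f := fun t => t ^ M * Real.exp (-(S ν * t))) (by
        filter_upwards [ae_restrict_mem measurableSet_Ioi] with t ht
        have : 0 < t := ht
        simp only [Pi.zero_apply]
        positivity)
      (c := M.factorial * (S ν ^ (M + 1))⁻¹) (by have := hS ν; positivity) (aux_gamma M _ (hS ν))
    simp_rw [ENNReal.ofReal_mul (show 0 ≤ P ν from hP ν)]
    rw [lintegral_const_mul' _ _ ENNReal.ofReal_ne_top, h]
  have step2 : ∀ t ∈ Set.Ioi (0 : ℝ),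
      ∫⁻ ν, ENNReal.ofReal (P ν * (t ^ M * Real.exp (-(S ν * t))))
      = ENNReal.ofReal ((Real.pi ^ n * (∏ j, ((q j).factorial : ℝ))) *
          (t ^ K * Real.exp (-(1 * t)))) := by
    intro t ht
    have ht : 0 < t := ht
    apply aux_lint
    · exact Filter.Eventually.of_forall fun ν => mul_nonneg (hP ν) (by positivity)
    · positivity
    · have e : ∀ ν, P ν * (t ^ M * Real.exp (-(S ν * t))) = (t ^ M * Real.exp (-(1 * t))) *
          ∏ j, (Complex.normSq (ν j) ^ q j * Real.exp (-(Complex.normSq (ν j) * t))) := by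
        intro ν
        rw [Finset.prod_mul_distrib, ← Real.exp_sum, hPdef, hSdef]
        simp only
        rw [Finset.sum_neg_distrib, ← Finset.sum_mul, add_mul, neg_add, Real.exp_add]
        ring
      simp_rw [e]
      rw [integral_const_mul, integral_fintype_prod_volume_eq_prod
        (f := fun j (z : ℂ) => Complex.normSq z ^ q j * Real.exp (-(Complex.normSq z * t)))]
      simp_rw [aux_complex _ t ht]
      rw [Finset.prod_mul_distrib, Finset.prod_mul_distrib, Finset.prod_inv_distrib,
        Finset.prod_pow_eq_pow_sum, Finset.sum_add_distrib]
      simp only [Finset.prod_const, Finset.card_univ, Fintype.card_fin, Finset.sum_const,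
        smul_eq_mul, mul_one]
      rw [hM, add_assoc, pow_add]
      field_simp
  have step3 : ∫⁻ t in Set.Ioi (0 : ℝ), ENNReal.ofReal ((Real.pi ^ n * (∏ j, ((q j).factorial : ℝ))) *
          (t ^ K * Real.exp (-(1 * t))))
      = ENNReal.ofReal ((Real.pi ^ n * (∏ j, ((q j).factorial : ℝ))) * K.factorial) := by
    apply aux_lint
    · filter_upwards [ae_restrict_mem measurableSet_Ioi] with t ht
      have : 0 < t := ht
      simp only [Pi.zero_apply]
      positivity
    · positivity
    · rw [integral_const_mul, aux_gamma K 1 one_pos]; simp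
  have key : ∫⁻ ν, ENNReal.ofReal (P ν * (M.factorial * (S ν ^ (M + 1))⁻¹))
      = ENNReal.ofReal ((Real.pi ^ n * (∏ j, ((q j).factorial : ℝ))) * K.factorial) := by
    rw [← lintegral_congr step1]
    rw [lintegral_lintegral_swap, setLIntegral_congr_fun measurableSet_Ioi step2, step3]
    apply Measurable.aemeasurable
    apply Measurable.ennreal_ofReal
    apply Continuous.measurable
    fun_prop
  have e2 : ∫ ν, P ν * (M.factorial * (S ν ^ (M + 1))⁻¹)
      = (Real.pi ^ n * (∏ j, ((q j).factorial : ℝ))) * K.factorial := by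
    rw [integral_eq_lintegral_of_nonneg_ae, key, ENNReal.toReal_ofReal (by positivity)]
    · exact Filter.Eventually.of_forall fun ν => mul_nonneg (hP ν) (by have := hS ν; positivity)
    · apply Continuous.aestronglyMeasurable
      exact hPc.mul (continuous_const.mul ((hSc.pow _).inv₀ fun ν => (pow_pos (hS ν) _).ne'))
  rw [eq_div_iff (by positivity), ← e2, ← integral_mul_const]
  congr 1; ext ν; ring

theorem aux_D (n m : ℕ) (q : Fin n → ℕ) (hq : ∑ j, q j ≤ m) :
    Dconst n m q = (∏ j, ((q j).factorial : ℝ)) * (m - ∑ j, q j).factorial / m.factorial := by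
  have h0 := aux_main n m (fun _ => 0)
  have h1 := aux_main n (m - ∑ j, q j) q
  rw [Nat.sub_add_cancel hq] at h1
  simp only [pow_zero, Finset.prod_const_one, one_mul, Finset.sum_const_zero, add_zero,
    Nat.factorial_zero, Nat.cast_one, mul_one] at h0
  rw [Dconst, cconst, h0, h1]
  have := Real.pi_pos
  field_simp

theorem aux_comb (n m : ℕ) (x : Fin n → ℂ) :
    ∑ q ∈ Finset.univ.filter (fun q : Fin n → Fin (m + 1) => ∑ j, (q j : ℕ) ≤ m),
      (m.factorial : ℂ) / ((∏ j, ((q j : ℕ).factorial : ℂ)) * (m - ∑ j, (q j : ℕ)).factorial)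
        * ∏ j, x j ^ (q j : ℕ) = (1 + ∑ j, x j) ^ m := by
  rw [add_comm (1 : ℂ), add_pow]
  rw [← Finset.sum_fiberwise_of_maps_to (t := Finset.range (m + 1))
    (g := fun q : Fin n → Fin (m + 1) => ∑ j, (q j : ℕ))
    (fun q hq => by simp at hq ⊢; omega)]
  refine Finset.sum_congr rfl fun k hk => ?_
  have hk : k ≤ m := by simp at hk; omega
  rw [Finset.sum_pow_eq_sum_piAntidiag, one_pow, mul_one, Finset.sum_mul]
  refine Finset.sum_bij (fun q _ => fun j => (q j : ℕ)) ?_ ?_ ?_ ?_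
  · intro q hq
    simp at hq ⊢
    exact hq.2
  · intro a _ b _ h
    ext j
    exact congrFun h j
  · intro b hb
    simp at hb
    have hb : ∑ j, b j = k := hb
    have hb' : ∀ j, b j < m + 1 := fun j => by
      have := Finset.single_le_sum (f := b) (fun i _ => Nat.zero_le _) (Finset.mem_univ j)
      omega
    exact ⟨fun j => ⟨b j, hb' j⟩, by simp; omega, rfl⟩
  · intro q hq
    simp at hq
    have hs := Nat.multinomial_spec Finset.univ (fun j => (q j : ℕ))
    rw [hq.2] at hs ⊢
    have hc := Nat.choose_mul_factorial_mul_factorial hk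
    have hs' : (∏ j, ((q j : ℕ).factorial : ℂ)) *
      (Nat.multinomial Finset.univ (fun j => (q j : ℕ)) : ℂ) = (k.factorial : ℂ) := by
      exact_mod_cast hs
    have hc' : (m.choose k : ℂ) * k.factorial * (m - k).factorial = m.factorial := by
      exact_mod_cast hc
    have hne : (∏ j, ((q j : ℕ).factorial : ℂ)) ≠ 0 :=
      Finset.prod_ne_zero_iff.2 fun j _ => by exact_mod_cast Nat.factorial_ne_zero _
    have hne2 : ((m - k).factorial : ℂ) ≠ 0 := by exact_mod_cast Nat.factorial_ne_zero _
    rw [← hc', ← hs']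
    field_simp

/-- closed form of the Rawnsley coherent state kernel:
`ψ_μ(ν) = Σ_{q₁+⋯+qₙ ≤ m} conj(μ^q) ν^q / D_q = (1 + ⟨μ,ν⟩)^m`. -/
theorem stmt_3 (n m : ℕ) (hn : 1 ≤ n) (μ ν : Fin n → ℂ) :
    ∑ q ∈ Finset.univ.filter (fun q : Fin n → Fin (m + 1) => ∑ j, (q j : ℕ) ≤ m),
      (starRingEnd ℂ) (∏ j, μ j ^ (q j : ℕ)) * (∏ j, ν j ^ (q j : ℕ)) /
        ((Dconst n m (fun j => (q j : ℕ)) : ℝ) : ℂ)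
    = (1 + ∑ j, (starRingEnd ℂ) (μ j) * ν j) ^ m := by
  rw [← aux_comb]
  refine Finset.sum_congr rfl fun q hq => ?_
  simp only [Finset.mem_filter, Finset.mem_univ, true_and] at hq
  rw [aux_D n m _ hq, map_prod, ← Finset.prod_mul_distrib]
  simp_rw [map_pow, ← mul_pow]
  push_cast
  rw [div_div_eq_mul_div]
  ring
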